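/- Let I be a monomial ideal in S = K[x₁,…,xₙ]. Then every synor resolution (F_*, δ_*) of S/I is a minimal multigraded free resolution of S/I: the sequence F_* is exact in homological degrees ≥ 1, the cokernel of δ₁ : F₁ → F₀ ≅ S is S/I, and δ_i(F_i) ⊆ (x₁,…,xₙ)F_{i−1} for all i ≥ 1. -/

import Mathlib

open Finsupp

set_option synthInstance.maxHeartbeats 1000000
set_option maxHeartbeats 1000000

noncomputable section

variable (K : Type) [Field K]

section Core
variable (P : Type) [Preorder P]

/-- Order chains with `n` elements of the poset `P`, written as strictly
decreasing tuples `(x₀ > x₁ > ⋯ > x_{n-1})`. -/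
def OChain (n : ℕ) : Type := {c : Fin n → P // StrictAnti c}

/-- The chain group in "level" `n`: the `K`-vector space with basis the order chains with
`n` elements.  Level `n` corresponds to homological degree `n - 1`; in particular
`CGrp K P 0 ≅ K` is the reduced part `C̃₋₁`. -/
abbrev CGrp (n : ℕ) : Type := OChain P n →₀ K

/-- Deletion of the `k`-th entry of an order chain. -/
def odel {n : ℕ} (k : Fin (n + 1)) (c : OChain P (n + 1)) : OChain P n :=
  ⟨c.1 ∘ k.succAbove, c.2.comp_strictMono (Fin.strictMono_succAbove k)⟩

/-- The simplicial boundary map (of the reduced simplicial chain complex of the order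
complex), from level `n+1` to level `n`. -/
def cbdry (n : ℕ) : CGrp K P (n + 1) →ₗ[K] CGrp K P n :=
  Finsupp.lsum K fun c => ∑ k : Fin (n + 1), ((-1 : K) ^ (k : ℕ)) • Finsupp.lsingle (odel P k c)

/-- The cycles in level `n` (every level-0 chain, i.e. multiple of the empty chain,
is a cycle). -/
def cyclesAt : (n : ℕ) → Submodule K (CGrp K P n)
  | 0 => ⊤
  | (n + 1) => LinearMap.ker (cbdry K P n)

/-- The boundaries in level `n`. -/
def boundariesIn (n : ℕ) : Submodule K (CGrp K P n) :=
  LinearMap.range (cbdry K P n)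

/-- `H̃_{n-1}(P) ≠ 0`: nontriviality of the reduced simplicial homology (with coefficients
in `K`) of the order complex of `P` in degree `n - 1` (level `n`). -/
def RHomNontrivial (n : ℕ) : Prop := ¬ cyclesAt K P n ≤ boundariesIn K P n

/-- The subspace of chains all of whose elements lie in the subset `J ⊆ P`
(the chain group of the subposet `J`). -/
def chainsIn (J : Set P) (n : ℕ) : Submodule K (CGrp K P n) :=
  Finsupp.supported K K {c : OChain P n | ∀ r, c.1 r ∈ J}

/-- Transport of chain groups along an equality of levels. -/
def castCGrp {a b : ℕ} (h : a = b) : CGrp K P a ≃ₗ[K] CGrp K P b :=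
  Finsupp.domLCongr (Equiv.cast (congrArg (OChain P) h))

end Core


section Synor
variable (P : Type) [PartialOrder P]

/-- For a family `S` of graded pieces (with `S n x` the piece of homological degree `n`,
i.e. level `n+1`, sitting over `x ∈ P`) and a subset `J ⊆ P`, the part of the complex
lying over `J`: at level `0` it is all of `C̃₋₁ = K`, and at level `n+1` it is
`⊕_{x ∈ J} S_n^{(x)}`. -/
def idealPart (S : (n : ℕ) → P → Submodule K (CGrp K P (n + 1))) (J : Set P) :
    (nn : ℕ) → Submodule K (CGrp K P nn)
  | 0 => ⊤
  | (n + 1) => ⨆ x ∈ J, S n x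

/-- A synor complex for the finite poset `P`: a strictly `P`-graded subcomplex
`S_*(P) ⊆ C̃_*(P)` of the reduced simplicial chain complex of the order complex of `P`
(we identify the injective `P`-graded chain map `φ` with the inclusion of its image) with:
`S_i(P) = ⊕_{x ∈ P} S_i(P)^{(x)}` with `S_i(P)^{(x)}` contained in the span of the order
chains with largest element `x` (`graded`); `∂(S_i(P)^{(x)}) ⊆ ⊕_{y<x} S_{i-1}(P)^{(y)}`
(`strict`; for degree `0` the boundary lands in `C̃₋₁ = K` automatically); (S1)
`dim_K S_i(P)^{(x)} = dim_K H̃_{i-1}(P_{<x})` (`dim_eq`, the dimension of the reduced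
homology being the dimension of the cycles minus the dimension of the boundaries); and
(S2) for every order ideal `J ⊆ P` the inclusion `S_*(P)^J ⊆ C̃_*(J)` induces an
isomorphism on homology (`quasiIso`: surjectivity and injectivity of the induced map). -/
structure SynorComplex : Type where
  S : (n : ℕ) → P → Submodule K (CGrp K P (n + 1))
  graded : ∀ (n : ℕ) (x : P),
    S n x ≤ Finsupp.supported K K {c : OChain P (n + 1) | c.1 0 = x}
  strict : ∀ (n : ℕ) (x : P), ∀ f ∈ S (n + 1) x,
    cbdry K P (n + 1) f ∈ ⨆ y ∈ Set.Iio x, S n y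
  dim_eq : ∀ (n : ℕ) (x : P),
    Module.finrank K ↥(S n x) =
      Module.finrank K ↥(cyclesAt K {y : P // y < x} n) -
        Module.finrank K ↥(boundariesIn K {y : P // y < x} n)
  quasiIso : ∀ J : Set P, IsLowerSet J → ∀ nn : ℕ,
    (∀ z ∈ cyclesAt K P nn ⊓ chainsIn K P J nn,
        ∃ a ∈ cyclesAt K P nn ⊓ idealPart K P S J nn,
          z - a ∈ Submodule.map (cbdry K P nn) (chainsIn K P J (nn + 1))) ∧
    (∀ a ∈ idealPart K P S J nn,
        a ∈ Submodule.map (cbdry K P nn) (chainsIn K P J (nn + 1)) →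
        a ∈ Submodule.map (cbdry K P nn) (idealPart K P S J (nn + 1)))

end Synor

section Monomial

variable (nv : ℕ)

/-- The polynomial ring `S = K[x₁, …, xₙ]`. -/
abbrev PolyS : Type := MvPolynomial (Fin nv) K

/-- The monomial `x^d` attached to an exponent vector `d`. -/
def monOf (d : Fin nv → ℕ) : PolyS K nv :=
  MvPolynomial.monomial (Finsupp.equivFunOnFinite.symm d) 1

/-- `I` is a monomial ideal: it is generated by monomials. -/
def IsMonomialIdeal (I : Ideal (PolyS K nv)) : Prop :=
  ∃ G : Set (Fin nv → ℕ), I = Ideal.span (monOf K nv '' G)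

/-- The minimal monomial generating set `G(I)` of a monomial ideal: exponent vectors of
the monomials of `I` that are minimal with respect to divisibility. -/
def minGens (I : Ideal (PolyS K nv)) : Set (Fin nv → ℕ) :=
  {d | monOf K nv d ∈ I ∧ ∀ d' < d, monOf K nv d' ∉ I}

/-- The underlying set of the LCM-lattice of a monomial ideal: all least common multiples
(= pointwise suprema of exponent vectors) of subsets of the minimal generators, ordered by
divisibility (= the pointwise order).  The empty subset contributes `lcm ∅ = 1`, i.e. the
zero exponent vector. -/
def lcmSet (I : Ideal (PolyS K nv)) : Set (Fin nv → ℕ) :=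
  {m | ∃ B : Finset (Fin nv → ℕ), ↑B ⊆ minGens K nv I ∧ m = B.sup id}

/-- The open interval `(1, m)` in the LCM-lattice of `I`. -/
def openInt (I : Ideal (PolyS K nv)) (m : Fin nv → ℕ) : Set (Fin nv → ℕ) :=
  {p | p ∈ lcmSet K nv I ∧ 0 < p ∧ p < m}

/-- Total degree of a monomial given by its exponent vector. -/
def degTot (m : Fin nv → ℕ) : ℕ := ∑ r, m r

end Monomial

section More
variable (P : Type) [PartialOrder P]

open Classical in
/-- The projection of a chain onto its graded component of chains with largest element
`x`. -/
def projTop (x : P) (n : ℕ) : CGrp K P (n + 1) →ₗ[K] CGrp K P (n + 1) :=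
  Finsupp.lsum K fun c => if c.1 0 = x then Finsupp.lsingle c else 0

/-- The empty order chain. -/
def emptyOC : OChain P 0 := ⟨fun r => r.elim0, fun a => a.elim0⟩

end More

/-- `L̄ = lcm(I) ∖ {1}`: the LCM-lattice of `I` with its bottom element (the monomial `1`,
i.e. the zero exponent vector) removed, as a poset under divisibility. -/
def lcmBar (nv : ℕ) (I : Ideal (PolyS K nv)) : Set (Fin nv → ℕ) :=
  {m | m ∈ lcmSet K nv I ∧ m ≠ 0}

open TensorProduct

/-! Embedding each `S(-m)` in `S` as the ideal generated by the monomial `m` turns `F_i` into a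
multigraded submodule of `S ⊗ C̃_{i-1}(L̄)`, and the differential `δ_i` into the restriction of
`id ⊗ ∂`. In multidegree `a` the synor resolution is therefore the part of the synor complex lying
over the order ideal `{m | m divides xᵃ}` of `L̄`. If this ideal is nonempty, it has a greatest
element, namely the lcm of the generators dividing `xᵃ`; its order complex is then a cone, hence
acyclic, and the quasi-isomorphism of the synor complex with the order complex over the ideal makes
the synor complex exact there as well. Minimality holds because `m / m'` is a nonconstant monomial
whenever `m' < m`. -/

section TensorCoeff
variable {R ι V W : Type*} [CommRing R] [AddCommGroup V] [Module R V] [AddCommGroup W] [Module R W]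

open Classical in
/-- The coefficients of a polynomial with values in a module, `R[x] ⊗ V ≃ ⨁ₐ V · xᵃ`. -/
def tensorCoeff : MvPolynomial ι R ⊗[R] V ≃ₗ[R] (ι →₀ ℕ) →₀ V :=
  TensorProduct.equivFinsuppOfBasisLeft (MvPolynomial.basisMonomials ι R)

lemma tensorCoeff_tmul (f : MvPolynomial ι R) (v : V) (a : ι →₀ ℕ) :
    tensorCoeff (f ⊗ₜ[R] v) a = f.coeff a • v := by
  classical
  exact TensorProduct.equivFinsuppOfBasisLeft_apply_tmul_apply _ f v a

lemma sum_monomial_tmul_tensorCoeff (y : MvPolynomial ι R ⊗[R] V) :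
    ∑ a ∈ (tensorCoeff y).support, MvPolynomial.monomial a (1 : R) ⊗ₜ tensorCoeff y a = y := by
  classical
  simpa [tensorCoeff, Finsupp.sum] using
    (TensorProduct.equivFinsuppOfBasisLeft_symm_apply (MvPolynomial.basisMonomials ι R)
      (tensorCoeff y)).symm

lemma tensorCoeff_monomial_smul (d a : ι →₀ ℕ) (y : MvPolynomial ι R ⊗[R] V) :
    tensorCoeff (MvPolynomial.monomial d (1 : R) • y) a =
      if d ≤ a then tensorCoeff y (a - d) else 0 := by
  induction y using TensorProduct.induction_on with
  | zero => simp
  | add x y hx hy =>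
    simp only [smul_add, map_add, Finsupp.add_apply, hx, hy]
    split_ifs <;> simp only [add_zero]
  | tmul f v =>
    rw [TensorProduct.smul_tmul', smul_eq_mul, tensorCoeff_tmul, tensorCoeff_tmul,
      MvPolynomial.coeff_monomial_mul', one_mul, ite_smul, zero_smul]

lemma monomial_smul_tensor_injective (d : ι →₀ ℕ) :
    Function.Injective fun y : MvPolynomial ι R ⊗[R] V => MvPolynomial.monomial d (1 : R) • y := by
  intro x y hxy
  refine tensorCoeff.injective (Finsupp.ext fun a => ?_)
  have h := congrArg (tensorCoeff · (d + a)) hxy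
  simpa only [tensorCoeff_monomial_smul, le_self_add, if_true, add_tsub_cancel_left] using h

lemma tensorCoeff_baseChange (d : V →ₗ[R] W) (y : MvPolynomial ι R ⊗[R] V) (a : ι →₀ ℕ) :
    tensorCoeff (d.baseChange (MvPolynomial ι R) y) a = d (tensorCoeff y a) := by
  induction y using TensorProduct.induction_on with
  | zero => simp
  | add x y hx hy => simp only [map_add, Finsupp.add_apply, hx, hy]
  | tmul f v => rw [LinearMap.baseChange_tmul, tensorCoeff_tmul, tensorCoeff_tmul, map_smul]

end TensorCoeff

section LabelledModule
variable {R ι P V : Type*} [CommRing R] [AddCommGroup V] [Module R V]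

variable (ι) in
/-- The module `⨁ₚ R[x] ⊗ S p` over `R[x]`. A labelling `e` of `P` by exponent vectors makes it
multigraded, with the summand at `p` standing for `R[x](-e p) ⊗ S p`; the labelling enters only
through the maps below. -/
abbrev LabelledModule (S : P → Submodule R V) : Type _ :=
  DirectSum P fun p => MvPolynomial ι R ⊗[R] S p

namespace LabelledModule
variable [DecidableEq P]

/-- The inclusion of the summand at `p`. -/
abbrev incl (S : P → Submodule R V) (p : P) :
    MvPolynomial ι R ⊗[R] S p →ₗ[MvPolynomial ι R] LabelledModule ι S :=
  DirectSum.lof (MvPolynomial ι R) P (fun p => MvPolynomial ι R ⊗[R] S p) p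

variable {e : P → ι →₀ ℕ} {S : P → Submodule R V}
  {N : Type*} [AddCommGroup N] [Module (MvPolynomial ι R) N]

lemma incl_tmul (p : P) (f : MvPolynomial ι R) (z : S p) :
    incl S p (f ⊗ₜ z) = f • incl S p (1 ⊗ₜ z) := by
  rw [← map_smul, TensorProduct.smul_tmul', smul_eq_mul, mul_one]

lemma hom_ext {f g : LabelledModule ι S →ₗ[MvPolynomial ι R] N}
    (h : ∀ p (z : S p), f (incl S p (1 ⊗ₜ z)) = g (incl S p (1 ⊗ₜ z))) : f = g := by
  refine DirectSum.linearMap_ext _ fun p => LinearMap.ext fun x => ?_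
  simp only [LinearMap.comp_apply]
  induction x using TensorProduct.induction_on with
  | zero => simp only [map_zero]
  | add x y hx hy => simp only [map_add, hx, hy]
  | tmul r z => rw [incl_tmul, map_smul, map_smul, h]

lemma range_le_of_forall_incl_one_tmul_mem {f : LabelledModule ι S →ₗ[MvPolynomial ι R] N}
    {T : Submodule (MvPolynomial ι R) N} (h : ∀ p (z : S p), f (incl S p (1 ⊗ₜ z)) ∈ T) :
    LinearMap.range f ≤ T := by
  rw [← T.ker_mkQ, LinearMap.range_le_ker_iff]
  exact hom_ext fun p z => (Submodule.Quotient.mk_eq_zero T).2 (h p z)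

variable (e S)

/-- The map `⨁ₚ R[x](-e p) ⊗ S p → R[x] ⊗ V` embedding each `R[x](-e p)` as the ideal generated by
the monomial `x ^ e p`. -/
def toTensor : LabelledModule ι S →ₗ[MvPolynomial ι R] MvPolynomial ι R ⊗[R] V :=
  DirectSum.toModule _ P _ fun p =>
    MvPolynomial.monomial (e p) (1 : R) • (S p).subtype.baseChange (MvPolynomial ι R)

lemma toTensor_incl (p : P) (x : MvPolynomial ι R ⊗[R] S p) :
    toTensor e S (incl S p x) =
      MvPolynomial.monomial (e p) (1 : R) • (S p).subtype.baseChange (MvPolynomial ι R) x :=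
  DirectSum.toModule_lof (M := fun p => MvPolynomial ι R ⊗[R] S p) _ p x

lemma toTensor_incl_tmul (p : P) (f : MvPolynomial ι R) (z : S p) :
    toTensor e S (incl S p (f ⊗ₜ z)) = (MvPolynomial.monomial (e p) 1 * f) ⊗ₜ (z : V) :=
  toTensor_incl e S p (f ⊗ₜ z)

lemma toTensor_eq_comp : toTensor e S =
    (DirectSum.coeLinearMap S).baseChange (MvPolynomial ι R) ∘ₗ
      (TensorProduct.directSumRight R (MvPolynomial ι R) (MvPolynomial ι R)
        fun p => S p).symm.toLinearMap ∘ₗ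
        DirectSum.lmap fun p => LinearMap.lsmul (MvPolynomial ι R) (MvPolynomial ι R ⊗[R] S p)
          (MvPolynomial.monomial (e p) 1) := by
  refine hom_ext fun p z => ?_
  simp only [toTensor_incl_tmul, LinearMap.comp_apply, DirectSum.lmap_lof, LinearMap.lsmul_apply,
    LinearEquiv.coe_coe, TensorProduct.directSumRight_symm_lof_tmul,
    LinearMap.baseChange_tmul, DirectSum.coeLinearMap_lof, TensorProduct.smul_tmul', smul_eq_mul]

lemma toTensor_injective (hS : iSupIndep S) :
    Function.Injective (toTensor e S : LabelledModule ι S → MvPolynomial ι R ⊗[R] V) := by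
  rw [toTensor_eq_comp, LinearMap.coe_comp, LinearMap.coe_comp]
  have hbase : Function.Injective ((DirectSum.coeLinearMap S).baseChange (MvPolynomial ι R)) :=
    Module.Flat.lTensor_preserves_injective_linearMap _ hS.dfinsupp_lsum_injective
  exact hbase.comp ((LinearEquiv.injective _).comp
    ((DirectSum.lmap_injective _).2 fun p => monomial_smul_tensor_injective (e p)))

/-- The component of `⨁ₚ R[x](-e p) ⊗ S p` in multidegree `a`, as a submodule of `V`. -/
abbrev multidegreePart (a : ι →₀ ℕ) : Submodule R V :=
  ⨆ p ∈ {p | e p ≤ a}, S p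

lemma tensorCoeff_toTensor_mem (a : ι →₀ ℕ) (w : LabelledModule ι S) :
    tensorCoeff (toTensor e S w) a ∈ multidegreePart e S a := by
  induction w using DirectSum.induction_on with
  | zero => simp
  | add x y hx hy =>
    rw [map_add, map_add]
    exact add_mem hx hy
  | of p x =>
    rw [← DirectSum.lof_eq_of (MvPolynomial ι R), toTensor_incl, tensorCoeff_monomial_smul,
      tensorCoeff_baseChange]
    split_ifs with hp
    · exact le_biSup S hp (Subtype.prop _)
    · exact zero_mem _

lemma monomial_tmul_mem_range_toTensor {a : ι →₀ ℕ} {v : V} (hv : v ∈ multidegreePart e S a) :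
    MvPolynomial.monomial a (1 : R) ⊗ₜ v ∈ LinearMap.range (toTensor e S) := by
  suffices h : multidegreePart e S a ≤ ((LinearMap.range (toTensor e S)).restrictScalars R).comap
      (TensorProduct.mk R _ V (MvPolynomial.monomial a 1)) from h hv
  refine iSup₂_le fun p (hp : e p ≤ a) z hz =>
    ⟨incl S p (MvPolynomial.monomial (a - e p) 1 ⊗ₜ ⟨z, hz⟩), ?_⟩
  rw [toTensor_incl_tmul, MvPolynomial.monomial_mul, add_tsub_cancel_of_le hp, mul_one]
  rfl

variable {W : Type*} [AddCommGroup W] [Module R W] {e S}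
  {d : V →ₗ[R] W} {D : LabelledModule ι S →ₗ[MvPolynomial ι R] N}
  {κ : N →ₗ[MvPolynomial ι R] MvPolynomial ι R ⊗[R] W}

lemma mem_ker_iff (hκ : Function.Injective κ)
    (hD : κ ∘ₗ D = d.baseChange (MvPolynomial ι R) ∘ₗ toTensor e S) {w : LabelledModule ι S} :
    w ∈ LinearMap.ker D ↔ ∀ a, d (tensorCoeff (toTensor e S w) a) = 0 := by
  have hw : κ (D w) = d.baseChange (MvPolynomial ι R) (toTensor e S w) := LinearMap.congr_fun hD w
  rw [LinearMap.mem_ker, ← map_eq_zero_iff κ hκ, hw, ← map_eq_zero_iff _ tensorCoeff.injective,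
    Finsupp.ext_iff]
  simp only [tensorCoeff_baseChange, Finsupp.zero_apply]

lemma mem_range_iff (hκ : Function.Injective κ)
    (hD : κ ∘ₗ D = d.baseChange (MvPolynomial ι R) ∘ₗ toTensor e S) {x : N} :
    x ∈ LinearMap.range D ↔ ∀ a, tensorCoeff (κ x) a ∈ (multidegreePart e S a).map d := by
  have hDw (w) : κ (D w) = d.baseChange (MvPolynomial ι R) (toTensor e S w) :=
    LinearMap.congr_fun hD w
  constructor
  · rintro ⟨w, rfl⟩ a
    rw [hDw, tensorCoeff_baseChange]
    exact Submodule.mem_map_of_mem (tensorCoeff_toTensor_mem e S a w)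
  · intro h
    choose b hb hdb using h
    obtain ⟨w, hw⟩ : ∑ a ∈ (tensorCoeff (κ x)).support, MvPolynomial.monomial a (1 : R) ⊗ₜ b a ∈
        LinearMap.range (toTensor e S) :=
      Submodule.sum_mem _ fun a _ => monomial_tmul_mem_range_toTensor e S (hb a)
    refine ⟨w, hκ ?_⟩
    rw [hDw, hw, map_sum, ← sum_monomial_tmul_tensorCoeff (κ x)]
    simp only [LinearMap.baseChange_tmul, hdb, sum_monomial_tmul_tensorCoeff]

lemma range_eq_ker {V' : Type*} [AddCommGroup V'] [Module R V'] {S' : P → Submodule R V'}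
    {d' : V' →ₗ[R] V} {D' : LabelledModule ι S' →ₗ[MvPolynomial ι R] LabelledModule ι S}
    (hS : iSupIndep S)
    (hD' : toTensor e S ∘ₗ D' = d'.baseChange (MvPolynomial ι R) ∘ₗ toTensor e S')
    (hκ : Function.Injective κ)
    (hD : κ ∘ₗ D = d.baseChange (MvPolynomial ι R) ∘ₗ toTensor e S)
    (hexact : ∀ a, (multidegreePart e S' a).map d' = multidegreePart e S a ⊓ LinearMap.ker d) :
    LinearMap.range D' = LinearMap.ker D := by
  ext w
  rw [mem_range_iff (N := LabelledModule ι S) (toTensor_injective e S hS) hD', mem_ker_iff hκ hD]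
  refine forall_congr' fun a => ?_
  rw [hexact, Submodule.mem_inf, LinearMap.mem_ker]
  exact and_iff_right (tensorCoeff_toTensor_mem e S a w)

end LabelledModule
end LabelledModule

section OrderComplex
variable {K} {P : Type} [Preorder P] {n : ℕ} {J : Set P}

lemma eqOn_chainsIn {M : Type*} [AddCommGroup M] [Module K M] {f g : CGrp K P n →ₗ[K] M}
    (h : ∀ c : OChain P n, (∀ r, c.1 r ∈ J) → f (single c 1) = g (single c 1)) :
    Set.EqOn f g (chainsIn K P J n) := by
  rw [chainsIn, Finsupp.supported_eq_span_single]
  refine LinearMap.eqOn_span ?_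
  rintro _ ⟨c, hc, rfl⟩
  exact h c hc

lemma map_chainsIn_le {M : Type*} [AddCommGroup M] [Module K M] {f : CGrp K P n →ₗ[K] M}
    {N : Submodule K M} (h : ∀ c : OChain P n, (∀ r, c.1 r ∈ J) → f (single c 1) ∈ N) :
    (chainsIn K P J n).map f ≤ N := by
  rw [chainsIn, Finsupp.supported_eq_span_single, Submodule.map_span_le]
  rintro _ ⟨c, hc, rfl⟩
  exact h c hc

lemma cbdry_single (c : OChain P (n + 1)) (r : K) :
    cbdry K P n (single c r) = ∑ k : Fin (n + 1), (-1 : K) ^ (k : ℕ) • single (odel P k c) r := by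
  simp [cbdry]

lemma cbdry_comp_cbdry (n : ℕ) : cbdry K P n ∘ₗ cbdry K P (n + 1) = 0 := by
  refine Finsupp.lhom_ext fun c r => ?_
  simp only [LinearMap.comp_apply, LinearMap.zero_apply, cbdry_single, map_sum, map_smul,
    Finset.smul_sum, smul_smul, ← pow_add]
  rw [← Fintype.sum_prod_type']
  -- Deleting the entries `i` and then `j` amounts to deleting the same two entries in the other
  -- order, with the opposite sign.
  refine Finset.sum_involution (fun x _ => (x.1.succAbove x.2, x.2.predAbove x.1)) ?_ ?_
    (fun _ _ => Finset.mem_univ _) ?_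
  · rintro ⟨i, j⟩ -
    have hdel : odel P (j.predAbove i) (odel P (i.succAbove j) c) = odel P j (odel P i c) :=
      Subtype.ext <| funext fun k =>
        congrArg c.1 (Fin.succAbove_succAbove_succAbove_predAbove i j k)
    simp only [hdel]
    rw [Fin.neg_one_pow_succAbove_add_predAbove, neg_smul, add_neg_cancel]
  · rintro ⟨i, j⟩ - - h
    exact Fin.succAbove_ne i j (congrArg Prod.fst h)
  · rintro ⟨i, j⟩ -
    simp [Fin.succAbove_succAbove_predAbove, Fin.predAbove_predAbove_succAbove]

/-- The order chain `t > x₀ > ⋯ > x_{n-1}` obtained by prepending `t` to `c`. -/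
def OChain.cons (t : P) (c : OChain P n) (h : ∀ j, c.1 j < t) : OChain P (n + 1) :=
  ⟨Fin.cons t c.1, (Fin.liftFun_cons (· > ·)).2 ⟨h, c.2⟩⟩

lemma odel_zero_cons {t : P} {c : OChain P n} (h : ∀ j, c.1 j < t) :
    odel P 0 (c.cons t h) = c :=
  rfl

lemma odel_succ_cons {t : P} {c : OChain P (n + 1)} (h : ∀ j, c.1 j < t) (k : Fin (n + 1)) :
    odel P k.succ (c.cons t h) = (odel P k c).cons t fun _ => h _ := by
  refine Subtype.ext (funext fun j => ?_)
  refine Fin.cases ?_ (fun j => ?_) j <;> simp [odel, OChain.cons, Fin.removeNth]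

lemma odel_zero_lt (c : OChain P (n + 1)) (j : Fin n) : (odel P 0 c).1 j < c.1 0 :=
  c.2 (Fin.succ_pos j)

lemma cons_odel_zero (c : OChain P (n + 1)) :
    (odel P 0 c).cons (c.1 0) (odel_zero_lt c) = c :=
  Subtype.ext (Fin.cons_self_tail c.1)

open Classical in
/-- The cone operator with apex `t`, the contracting homotopy of the order complex of a poset with
greatest element `t`. It vanishes on the chains to which `t` cannot be prepended. -/
def coneOp (t : P) (n : ℕ) : CGrp K P n →ₗ[K] CGrp K P (n + 1) :=
  Finsupp.lsum K fun c => if h : ∀ j, c.1 j < t then Finsupp.lsingle (c.cons t h) else 0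

lemma coneOp_single_of_lt {t : P} {c : OChain P n} (h : ∀ j, c.1 j < t) (r : K) :
    coneOp t n (single c r) = single (c.cons t h) r := by
  rw [coneOp, Finsupp.lsum_single, dif_pos h, Finsupp.lsingle_apply]

lemma coneOp_single_of_not_lt {t : P} {c : OChain P n} (h : ¬ ∀ j, c.1 j < t) (r : K) :
    coneOp t n (single c r) = 0 := by
  rw [coneOp, Finsupp.lsum_single, dif_neg h, LinearMap.zero_apply]

lemma map_coneOp_chainsIn_le {t : P} (ht : t ∈ J) :
    (chainsIn K P J n).map (coneOp t n) ≤ chainsIn K P J (n + 1) := by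
  refine map_chainsIn_le fun c hc => ?_
  by_cases h : ∀ j, c.1 j < t
  · rw [coneOp_single_of_lt h]
    exact Finsupp.single_mem_supported K _ (Fin.cases ht hc)
  · rw [coneOp_single_of_not_lt h]
    exact zero_mem _

lemma cbdry_coneOp_zero (t : P) (z : CGrp K P 0) : cbdry K P 0 (coneOp t 0 z) = z := by
  suffices h : cbdry K P 0 ∘ₗ coneOp t 0 = LinearMap.id from LinearMap.congr_fun h z
  refine Finsupp.lhom_ext fun c r => ?_
  rw [LinearMap.comp_apply, coneOp_single_of_lt (fun j => j.elim0), cbdry_single]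
  simp [odel_zero_cons]

lemma cbdry_coneOp_single_of_lt {t : P} {c : OChain P (n + 1)} (h : ∀ j, c.1 j < t) (r : K) :
    cbdry K P (n + 1) (coneOp t (n + 1) (single c r)) + coneOp t n (cbdry K P n (single c r)) =
      single c r := by
  have hdel (k : Fin (n + 1)) (j) : (odel P k c).1 j < t := h _
  simp only [coneOp_single_of_lt h, cbdry_single, Fin.sum_univ_succ (n := n + 1), map_sum,
    odel_zero_cons, odel_succ_cons, map_smul, coneOp_single_of_lt (hdel _)]
  rw [add_assoc, ← Finset.sum_add_distrib]
  simp [pow_succ]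

lemma coneOp_cbdry_single (c : OChain P (n + 1)) (r : K) :
    coneOp (c.1 0) n (cbdry K P n (single c r)) = single c r := by
  have hsucc (k : Fin n) : coneOp (c.1 0) n (single (odel P k.succ c) r) = 0 := by
    refine coneOp_single_of_not_lt (fun h => ?_) r
    have : NeZero n := ⟨Fin.pos k |>.ne'⟩
    exact (h 0).ne (by simp [odel])
  rw [cbdry_single, Fin.sum_univ_succ, map_add, map_sum]
  simp only [map_smul, hsucc, smul_zero, Finset.sum_const_zero, add_zero, Fin.val_zero, pow_zero,
    one_smul, coneOp_single_of_lt (odel_zero_lt c), cons_odel_zero]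

end OrderComplex

section Acyclic
variable {P : Type} [PartialOrder P] {J : Set P} {t : P}

variable {K} in
lemma cbdry_coneOp_succ (ht : t ∈ upperBounds J) {n : ℕ} {z : CGrp K P (n + 1)}
    (hz : z ∈ chainsIn K P J (n + 1)) :
    cbdry K P (n + 1) (coneOp t (n + 1) z) + coneOp t n (cbdry K P n z) = z := by
  refine eqOn_chainsIn (f := cbdry K P (n + 1) ∘ₗ coneOp t (n + 1) + coneOp t n ∘ₗ cbdry K P n)
    (g := LinearMap.id) (fun c hc => ?_) hz
  obtain rfl | hlt := (ht (hc 0)).eq_or_lt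
  · have hnot : ¬ ∀ j, c.1 j < c.1 0 := fun h => (h 0).false
    rw [LinearMap.add_apply, LinearMap.comp_apply, LinearMap.comp_apply,
      coneOp_single_of_not_lt hnot, map_zero, zero_add, coneOp_cbdry_single, LinearMap.id_apply]
  · exact cbdry_coneOp_single_of_lt
      (fun j => (c.2.antitone (Fin.zero_le j)).trans_lt hlt) 1

/-- Vanishing of the reduced homology of the order complex of the subposet `J`. -/
def IsAcyclicOn (J : Set P) : Prop :=
  ∀ n, cyclesAt K P n ⊓ chainsIn K P J n ≤ (chainsIn K P J (n + 1)).map (cbdry K P n)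

lemma isAcyclicOn_of_isGreatest (ht : IsGreatest J t) : IsAcyclicOn K J := by
  rintro n z ⟨hz, hzJ⟩
  refine ⟨coneOp t n z, map_coneOp_chainsIn_le ht.1 (Submodule.mem_map_of_mem hzJ), ?_⟩
  cases n with
  | zero => exact cbdry_coneOp_zero t z
  | succ n =>
    have hhomotopy := cbdry_coneOp_succ ht.2 hzJ
    rwa [LinearMap.mem_ker.1 hz, map_zero, add_zero] at hhomotopy

end Acyclic

section ProjTop
variable {K} {P : Type} [PartialOrder P] {n : ℕ}

open Classical in
lemma projTop_eq_filter (x : P) (z : CGrp K P (n + 1)) :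
    projTop K P x n z = z.filter fun c => c.1 0 = x := by
  induction z using Finsupp.induction_linear with
  | zero => rw [map_zero, Finsupp.filter_zero]
  | add f g hf hg => rw [map_add, hf, hg, Finsupp.filter_add]
  | single c r =>
    rw [projTop, Finsupp.lsum_single]
    split_ifs with h
    · exact (Finsupp.filter_single_of_pos (fun c : OChain P (n + 1) => c.1 0 = x) h).symm
    · exact (Finsupp.filter_single_of_neg (fun c : OChain P (n + 1) => c.1 0 = x) h).symm

lemma projTop_eq_self {x : P} {z : CGrp K P (n + 1)}
    (hz : z ∈ Finsupp.supported K K {c : OChain P (n + 1) | c.1 0 = x}) :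
    projTop K P x n z = z := by
  rw [projTop_eq_filter, Finsupp.filter_eq_self_iff]
  exact fun c hc => hz (Finsupp.mem_support_iff.2 hc)

lemma projTop_eq_zero {x : P} {z : CGrp K P (n + 1)}
    (hz : z ∈ Finsupp.supported K K {c : OChain P (n + 1) | c.1 0 ≠ x}) :
    projTop K P x n z = 0 := by
  rw [projTop_eq_filter, Finsupp.filter_eq_zero_iff]
  exact fun c hc => by_contra fun h => hz (Finsupp.mem_support_iff.2 h) hc

lemma finite_setOf_projTop_ne_zero (z : CGrp K P (n + 1)) :
    {x | projTop K P x n z ≠ 0}.Finite := by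
  refine (z.hasFiniteSupport.image fun c => c.1 0).subset fun x hx => ?_
  by_contra h
  exact hx (projTop_eq_zero fun c hc hcx => h ⟨c, Finsupp.mem_support_iff.1 hc, hcx⟩)

lemma finsum_mem_projTop {J : Set P} {z : CGrp K P (n + 1)}
    (hz : z ∈ Finsupp.supported K K {c : OChain P (n + 1) | c.1 0 ∈ J}) :
    ∑ᶠ x ∈ J, projTop K P x n z = z := by
  classical
  ext c
  have hfin : (J ∩ Function.support fun x => projTop K P x n z).Finite :=
    (finite_setOf_projTop_ne_zero z).inter_of_right J
  calc (∑ᶠ x ∈ J, projTop K P x n z) c = ∑ᶠ x ∈ J, projTop K P x n z c :=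
        AddMonoidHom.map_finsum_mem' (Finsupp.applyAddHom c) hfin
    _ = z c := ?_
  simp only [projTop_eq_filter, Finsupp.filter_apply]
  by_cases hc : z c = 0
  · simp only [hc, ite_self, finsum_mem_zero]
  · rw [finsum_eq_single _ (c.1 0)]
    · simp [show c.1 0 ∈ J from hz (Finsupp.mem_support_iff.2 hc)]
    · simp +contextual [eq_comm]

end ProjTop

section SynorComplex
variable {K} {P : Type} [PartialOrder P] (σ : SynorComplex K P) {J : Set P}

namespace SynorComplex

lemma iSup_le_supported (n : ℕ) (J : Set P) :
    ⨆ x ∈ J, σ.S n x ≤ Finsupp.supported K K {c : OChain P (n + 1) | c.1 0 ∈ J} :=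
  iSup₂_le fun x hx => (σ.graded n x).trans <|
    Finsupp.supported_mono fun c (hc : c.1 0 = x) => show c.1 0 ∈ J from hc ▸ hx

lemma iSupIndep_S (n : ℕ) : iSupIndep (σ.S n) := fun x =>
  (Finsupp.disjoint_supported_supported (disjoint_compl_right
    (a := {c : OChain P (n + 1) | c.1 0 = x}))).mono
    (σ.graded n x) (σ.iSup_le_supported n {x}ᶜ)

lemma idealPart_le_chainsIn (hJ : IsLowerSet J) (n : ℕ) :
    idealPart K P σ.S J n ≤ chainsIn K P J n := by
  cases n with
  | zero => exact fun z _ c _ r => r.elim0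
  | succ n =>
    exact (σ.iSup_le_supported n J).trans <| Finsupp.supported_mono fun c hc r =>
      hJ (c.2.antitone (Fin.zero_le r)) hc

lemma idealPart_inf_cyclesAt_le (hJ : IsLowerSet J) (hacyclic : IsAcyclicOn K J) (n : ℕ) :
    idealPart K P σ.S J n ⊓ cyclesAt K P n ≤
      (idealPart K P σ.S J (n + 1)).map (cbdry K P n) := fun z hz =>
  (σ.quasiIso J hJ n).2 z hz.1 (hacyclic n ⟨hz.2, σ.idealPart_le_chainsIn hJ n hz.1⟩)

lemma map_cbdry_iSup (hJ : IsLowerSet J) (hacyclic : J.Nonempty → IsAcyclicOn K J) (n : ℕ) :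
    (⨆ x ∈ J, σ.S (n + 1) x).map (cbdry K P (n + 1)) =
      (⨆ x ∈ J, σ.S n x) ⊓ LinearMap.ker (cbdry K P n) := by
  apply le_antisymm
  · refine le_inf ?_ (Submodule.map_le_iff_le_comap.2 fun z _ =>
      LinearMap.congr_fun (cbdry_comp_cbdry n) z)
    rw [Submodule.map_le_iff_le_comap]
    refine iSup₂_le fun x hx z hz => ?_
    have hmono : ⨆ y ∈ Set.Iio x, σ.S n y ≤ ⨆ y ∈ J, σ.S n y :=
      biSup_mono fun y hy => hJ (le_of_lt hy) hx
    exact hmono (σ.strict n x z hz)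
  · obtain rfl | hne := J.eq_empty_or_nonempty
    · simp
    · exact σ.idealPart_inf_cyclesAt_le hJ (hacyclic hne) (n + 1)

lemma projTop_mem {n : ℕ} {z : CGrp K P (n + 1)} (hz : z ∈ ⨆ x ∈ J, σ.S n x) (y : P) :
    projTop K P y n z ∈ σ.S n y := by
  suffices h : ⨆ x ∈ J, σ.S n x ≤ (σ.S n y).comap (projTop K P y n) from h hz
  refine iSup₂_le fun x _ z hz => ?_
  obtain rfl | hxy := eq_or_ne x y
  · rwa [Submodule.mem_comap, projTop_eq_self (σ.graded n x hz)]
  · rw [Submodule.mem_comap, projTop_eq_zero]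
    · exact zero_mem _
    · exact Finsupp.supported_mono (fun (c : OChain P (n + 1)) (hc : c.1 0 = x) => hc.trans_ne hxy)
        (σ.graded n x hz)

/-- The component `ζ_q` of the boundary of a synor chain `ζ` in its decomposition `∂ζ = ∑ ζ_q` over
the elements `q < p`. -/
def boundaryComponent {i : ℕ} {p : P} (ζ : σ.S (i + 1) p) (q : P) : σ.S i q :=
  ⟨projTop K P q i (cbdry K P (i + 1) ζ), σ.projTop_mem (σ.strict i p ζ ζ.2) q⟩

lemma map_finsum_boundaryComponent {M N : Type*} [AddCommMonoid M] [AddCommMonoid N] (g : M →+ N)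
    {i : ℕ} {f : ∀ q, σ.S i q → M} (hf : ∀ q, f q 0 = 0) {p : P} (ζ : σ.S (i + 1) p) :
    g (∑ᶠ q ∈ Set.Iio p, f q (σ.boundaryComponent ζ q)) =
      ∑ᶠ q ∈ Set.Iio p, g (f q (σ.boundaryComponent ζ q)) := by
  have hsupport : Function.support (fun q => f q (σ.boundaryComponent ζ q)) ⊆
      {q | projTop K P q i (cbdry K P (i + 1) ζ) ≠ 0} := fun q hq h => hq <| by
    simp only [show σ.boundaryComponent ζ q = 0 from Subtype.ext h, hf]
  exact g.map_finsum_mem' (((finite_setOf_projTop_ne_zero _).subset hsupport).inter_of_right _)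

lemma finsum_boundaryComponent {i : ℕ} {p : P} (ζ : σ.S (i + 1) p) :
    ∑ᶠ q ∈ Set.Iio p, (σ.boundaryComponent ζ q : CGrp K P (i + 1)) = cbdry K P (i + 1) ζ :=
  finsum_mem_projTop (σ.iSup_le_supported i _ (σ.strict i p ζ ζ.2))

end SynorComplex

instance subsingleton_oChain_zero : Subsingleton (OChain P 0) :=
  ⟨fun _ _ => Subtype.ext (funext fun r => r.elim0)⟩

variable (K P) in
/-- The augmentation `C̃₀(P) → C̃₋₁(P) = K`. -/
def augmentation : CGrp K P 1 →ₗ[K] K :=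
  Finsupp.lapply (emptyOC P) ∘ₗ cbdry K P 0

lemma ker_augmentation : LinearMap.ker (augmentation K P) = LinearMap.ker (cbdry K P 0) :=
  LinearMap.ker_comp_of_ker_eq_bot _ <| LinearMap.ker_eq_bot.2
    (Finsupp.uniqueLinearEquiv K K (emptyOC P)).injective

lemma SynorComplex.mem_map_augmentation_iff (hJ : IsLowerSet J)
    (hacyclic : J.Nonempty → IsAcyclicOn K J) {r : K} :
    r ∈ (⨆ x ∈ J, σ.S 0 x).map (augmentation K P) ↔ (r ≠ 0 → J.Nonempty) := by
  obtain rfl | hne := J.eq_empty_or_nonempty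
  · simp
  · obtain ⟨z, hz, hzr⟩ := σ.idealPart_inf_cyclesAt_le hJ (hacyclic hne) 0
      (x := single (emptyOC P) r) ⟨trivial, trivial⟩
    refine iff_of_true ⟨z, hz, ?_⟩ fun _ => hne
    rw [augmentation, LinearMap.comp_apply, hzr, Finsupp.lapply_apply, Finsupp.single_eq_same]

end SynorComplex

section MaximalIdeal
variable {R ι : Type*} [CommSemiring R]

lemma monomial_mem_span_range_X {d : ι →₀ ℕ} (hd : d ≠ 0) (r : R) :
    MvPolynomial.monomial d r ∈
      Ideal.span (Set.range (MvPolynomial.X : ι → MvPolynomial ι R)) := by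
  obtain ⟨i, hi⟩ := Finsupp.ne_iff.1 hd
  rw [← Set.image_univ, MvPolynomial.mem_ideal_span_X_image]
  intro m hm
  rw [Finset.mem_singleton.1 (MvPolynomial.support_monomial_subset hm)]
  exact ⟨i, Set.mem_univ i, hi⟩

end MaximalIdeal

section SynorResolution
variable {K} {ι : Type*} {P : Type} [PartialOrder P] [DecidableEq P]
  (e : P → ι →₀ ℕ) (σ : SynorComplex K P)

open LabelledModule

/-- The differential `F_{i+2} → F_{i+1}` of the synor resolution attached to the labelling `e`:
`ζ ⊗ 1 ↦ ∑_{q < p} (x ^ e p / x ^ e q) · (ζ_q ⊗ 1)` for `ζ` in the piece over `p`. -/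
def IsSynorDifferential (i : ℕ)
    (D : LabelledModule ι (σ.S (i + 1)) →ₗ[MvPolynomial ι K] LabelledModule ι (σ.S i)) : Prop :=
  ∀ (p : P) (ζ : σ.S (i + 1) p), D (incl _ p (1 ⊗ₜ ζ)) =
    ∑ᶠ q ∈ Set.Iio p,
      incl _ q (MvPolynomial.monomial (e p - e q) 1 ⊗ₜ σ.boundaryComponent ζ q)

/-- The differential `F₁ → F₀` of the synor resolution attached to the labelling `e`, with `F₀`
identified with the polynomial ring. -/
def IsSynorAugmentation (D₀ : LabelledModule ι (σ.S 0) →ₗ[MvPolynomial ι K] MvPolynomial ι K) :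
    Prop :=
  ∀ (p : P) (ζ : σ.S 0 p),
    D₀ (incl _ p (1 ⊗ₜ ζ)) = augmentation K P ζ • MvPolynomial.monomial (e p) 1

variable {e σ}

lemma IsSynorDifferential.toTensor_comp {i : ℕ}
    {D : LabelledModule ι (σ.S (i + 1)) →ₗ[MvPolynomial ι K] LabelledModule ι (σ.S i)}
    (hD : IsSynorDifferential e σ i D) (he : Monotone e) :
    toTensor e (σ.S i) ∘ₗ D =
      (cbdry K P (i + 1)).baseChange (MvPolynomial ι K) ∘ₗ toTensor e (σ.S (i + 1)) := by
  refine hom_ext fun p ζ => ?_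
  have hsummand (q : P) (hq : q ∈ Set.Iio p) :
      toTensor e (σ.S i)
        (incl _ q (MvPolynomial.monomial (e p - e q) 1 ⊗ₜ σ.boundaryComponent ζ q)) =
      MvPolynomial.monomial (e p) (1 : K) ⊗ₜ (σ.boundaryComponent ζ q : CGrp K P (i + 1)) := by
    rw [toTensor_incl_tmul, MvPolynomial.monomial_mul, add_tsub_cancel_of_le (he (le_of_lt hq)),
      mul_one]
  calc toTensor e (σ.S i) (D (incl _ p (1 ⊗ₜ ζ)))
      = ∑ᶠ q ∈ Set.Iio p, toTensor e (σ.S i)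
          (incl _ q (MvPolynomial.monomial (e p - e q) 1 ⊗ₜ σ.boundaryComponent ζ q)) := by
        rw [hD]
        exact σ.map_finsum_boundaryComponent (toTensor e (σ.S i)).toAddMonoidHom
          (f := fun q z => incl _ q (MvPolynomial.monomial (e p - e q) 1 ⊗ₜ z)) (by simp) ζ
    _ = ∑ᶠ q ∈ Set.Iio p,
          MvPolynomial.monomial (e p) (1 : K) ⊗ₜ (σ.boundaryComponent ζ q : CGrp K P (i + 1)) :=
        finsum_mem_congr rfl hsummand
    _ = MvPolynomial.monomial (e p) (1 : K) ⊗ₜ cbdry K P (i + 1) ζ := by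
        rw [← σ.finsum_boundaryComponent ζ]
        exact (σ.map_finsum_boundaryComponent (TensorProduct.mk K (MvPolynomial ι K)
          (CGrp K P (i + 1)) (MvPolynomial.monomial (e p) 1)).toAddMonoidHom
          (f := fun _ z => z) (fun _ => rfl) ζ).symm
    _ = (cbdry K P (i + 1)).baseChange _ (toTensor e (σ.S (i + 1)) (incl _ p (1 ⊗ₜ ζ))) := by
        rw [toTensor_incl_tmul, LinearMap.baseChange_tmul, mul_one]

lemma IsSynorDifferential.range_le {i : ℕ}
    {D : LabelledModule ι (σ.S (i + 1)) →ₗ[MvPolynomial ι K] LabelledModule ι (σ.S i)}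
    (hD : IsSynorDifferential e σ i D) (he : StrictMono e) :
    LinearMap.range D ≤ Ideal.span (Set.range (MvPolynomial.X : ι → MvPolynomial ι K)) • ⊤ := by
  refine range_le_of_forall_incl_one_tmul_mem (N := LabelledModule ι (σ.S i)) fun p ζ => ?_
  rw [hD]
  refine finsum_mem_induction (· ∈ _) (zero_mem _) (fun _ _ => add_mem) fun q hq => ?_
  rw [incl_tmul]
  exact Submodule.smul_mem_smul
    (monomial_mem_span_range_X (tsub_pos_of_lt (he hq)).ne' 1) Submodule.mem_top

variable (K) in
/-- The identification of the polynomial ring with its base change `K[x] ⊗ K`. -/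
def tensorSelf : MvPolynomial ι K ≃ₗ[MvPolynomial ι K] MvPolynomial ι K ⊗[K] K :=
  (TensorProduct.AlgebraTensorModule.rid K (MvPolynomial ι K) (MvPolynomial ι K)).symm

lemma tensorCoeff_tensorSelf (f : MvPolynomial ι K) (a : ι →₀ ℕ) :
    tensorCoeff (tensorSelf K f) a = f.coeff a := by
  rw [tensorSelf, TensorProduct.AlgebraTensorModule.rid_symm_apply, tensorCoeff_tmul, smul_eq_mul,
    mul_one]

section Augmentation
variable {D₀ : LabelledModule ι (σ.S 0) →ₗ[MvPolynomial ι K] MvPolynomial ι K}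

lemma IsSynorAugmentation.tensorSelf_comp (hD₀ : IsSynorAugmentation e σ D₀) :
    (tensorSelf K).toLinearMap ∘ₗ D₀ =
      (augmentation K P).baseChange (MvPolynomial ι K) ∘ₗ toTensor e (σ.S 0) := by
  refine hom_ext fun p ζ => ?_
  simp only [LinearMap.comp_apply, LinearEquiv.coe_coe, hD₀ p ζ, toTensor_incl_tmul,
    LinearMap.baseChange_tmul, tensorSelf, TensorProduct.AlgebraTensorModule.rid_symm_apply,
    TensorProduct.smul_tmul, smul_eq_mul, mul_one]

lemma IsSynorAugmentation.range_eq (hD₀ : IsSynorAugmentation e σ D₀) (he : Monotone e)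
    (hacyclic : ∀ a, {p | e p ≤ a}.Nonempty → IsAcyclicOn K {p | e p ≤ a}) :
    LinearMap.range D₀ = Ideal.span (Set.range fun p => MvPolynomial.monomial (e p) (1 : K)) := by
  ext f
  rw [mem_range_iff (tensorSelf K).injective hD₀.tensorSelf_comp,
    Set.range_comp' (fun d => MvPolynomial.monomial d (1 : K)) e,
    MvPolynomial.mem_ideal_span_monomial_image]
  refine forall_congr' fun a => ?_
  rw [LinearEquiv.coe_coe, tensorCoeff_tensorSelf,
    σ.mem_map_augmentation_iff (J := {p | e p ≤ a}) ((isLowerSet_Iic a).preimage he)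
      (hacyclic a),
    MvPolynomial.mem_support_iff, Set.exists_range_iff]
  rfl

end Augmentation

variable (e σ) in
theorem synor_resolution_minimal_free_general (he : StrictMono e) (he0 : ∀ p, e p ≠ 0)
    (hacyclic : ∀ a, {p | e p ≤ a}.Nonempty → IsAcyclicOn K {p | e p ≤ a})
    (δ : ∀ i, LabelledModule ι (σ.S (i + 1)) →ₗ[MvPolynomial ι K] LabelledModule ι (σ.S i))
    (δ0 : LabelledModule ι (σ.S 0) →ₗ[MvPolynomial ι K] MvPolynomial ι K)
    (hδ0 : IsSynorAugmentation e σ δ0) (hδ : ∀ i, IsSynorDifferential e σ i (δ i)) :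
    (∀ i, LinearMap.range (δ (i + 1)) = LinearMap.ker (δ i)) ∧
    LinearMap.range (δ 0) = LinearMap.ker δ0 ∧
    LinearMap.range δ0 = Ideal.span (Set.range fun p => MvPolynomial.monomial (e p) (1 : K)) ∧
    LinearMap.range δ0 ≤ Ideal.span (Set.range (MvPolynomial.X : ι → MvPolynomial ι K)) •
      (⊤ : Submodule (MvPolynomial ι K) (MvPolynomial ι K)) ∧
    ∀ i, LinearMap.range (δ i) ≤ Ideal.span (Set.range (MvPolynomial.X : ι → MvPolynomial ι K)) •
      (⊤ : Submodule (MvPolynomial ι K) (LabelledModule ι (σ.S i))) := by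
  have hexact (n : ℕ) (a : ι →₀ ℕ) := σ.map_cbdry_iSup
    ((isLowerSet_Iic a).preimage he.monotone) (hacyclic a) n
  have hrange := hδ0.range_eq he.monotone hacyclic
  refine ⟨fun i => ?_, ?_, hrange, ?_, fun i => (hδ i).range_le he⟩
  · exact range_eq_ker (N := LabelledModule ι (σ.S i)) (σ.iSupIndep_S (i + 1))
      ((hδ (i + 1)).toTensor_comp he.monotone) (toTensor_injective e _ (σ.iSupIndep_S i))
      ((hδ i).toTensor_comp he.monotone) (hexact (i + 1))
  · exact range_eq_ker (σ.iSupIndep_S 0) ((hδ 0).toTensor_comp he.monotone)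
      (tensorSelf K).injective hδ0.tensorSelf_comp fun a => by
        rw [ker_augmentation]; exact hexact 0 a
  · rw [hrange, smul_eq_mul, Ideal.mul_top, Ideal.span_le]
    rintro _ ⟨p, rfl⟩
    exact monomial_mem_span_range_X (he0 p) 1

end SynorResolution

section LcmLattice
variable {K} {nv : ℕ} {I : Ideal (PolyS K nv)}

lemma monOf_mem_of_le {d d' : Fin nv → ℕ} (hd : monOf K nv d ∈ I) (h : d ≤ d') :
    monOf K nv d' ∈ I := by
  refine I.mem_of_dvd ?_ hd
  exact MvPolynomial.monomial_dvd_monomial.2 ⟨Or.inr h, one_dvd _⟩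

lemma exists_minGens_le {d : Fin nv → ℕ} (hd : monOf K nv d ∈ I) :
    ∃ g ∈ minGens K nv I, g ≤ d := by
  obtain ⟨g, hgd, hg⟩ := exists_minimal_le_of_wellFoundedLT (fun d => monOf K nv d ∈ I) d hd
  exact ⟨g, ⟨hg.prop, fun d' hd' h => hg.not_lt h hd'⟩, hgd⟩

lemma monOf_mem_of_mem_lcmBar {p : Fin nv → ℕ} (hp : p ∈ lcmBar K nv I) : monOf K nv p ∈ I := by
  obtain ⟨⟨B, hB, rfl⟩, h0⟩ := hp
  obtain ⟨g, hg⟩ : B.Nonempty := by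
    rw [Finset.nonempty_iff_ne_empty]
    rintro rfl
    exact h0 rfl
  exact monOf_mem_of_le (hB hg).1 (Finset.le_sup (f := id) hg)

lemma ne_zero_of_mem_minGens (hI : I ≠ ⊤) {g : Fin nv → ℕ} (hg : g ∈ minGens K nv I) :
    g ≠ 0 := by
  rintro rfl
  refine hI ((Ideal.eq_top_iff_one I).2 ?_)
  have hsymm_zero : Finsupp.equivFunOnFinite.symm (0 : Fin nv → ℕ) = 0 := Finsupp.ext fun _ => rfl
  have hone := hg.1
  rwa [monOf, hsymm_zero] at hone

lemma minGens_subset_lcmBar (hI : I ≠ ⊤) : minGens K nv I ⊆ lcmBar K nv I := fun g hg =>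
  ⟨⟨{g}, by simpa using hg, by simp⟩, ne_zero_of_mem_minGens hI hg⟩

/-- The exponent vector of a monomial of `L̄`, as the finitely supported function expected by
`MvPolynomial.monomial`. -/
def lcmBarExponent (p : lcmBar K nv I) : Fin nv →₀ ℕ :=
  Finsupp.equivFunOnFinite.symm p.1

lemma lcmBarExponent_strictMono : StrictMono (lcmBarExponent (I := I)) :=
  fun _ _ h => h

lemma lcmBarExponent_ne_zero (p : lcmBar K nv I) : lcmBarExponent p ≠ 0 := fun h =>
  p.2.2 <| (Equiv.symm_apply_eq _).1 h

lemma lcmBarExponent_tsub (p q : lcmBar K nv I) :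
    lcmBarExponent p - lcmBarExponent q = Finsupp.equivFunOnFinite.symm (p.1 - q.1) :=
  Finsupp.ext fun _ => rfl

lemma span_monomial_lcmBarExponent (hI : IsMonomialIdeal K nv I) (hItop : I ≠ ⊤) :
    Ideal.span (Set.range fun p : lcmBar K nv I =>
      MvPolynomial.monomial (lcmBarExponent p) (1 : K)) = I := by
  apply le_antisymm
  · rw [Ideal.span_le]
    rintro _ ⟨p, rfl⟩
    exact monOf_mem_of_mem_lcmBar p.2
  · obtain ⟨G, hG⟩ := hI
    refine hG.le.trans (Ideal.span_le.2 ?_)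
    rintro _ ⟨d, hd, rfl⟩
    have hdI : monOf K nv d ∈ I := hG ▸ Ideal.subset_span (Set.mem_image_of_mem _ hd)
    obtain ⟨g, hg, hgd⟩ := exists_minGens_le hdI
    refine Ideal.mem_of_dvd _ (MvPolynomial.monomial_dvd_monomial.2 ⟨Or.inr hgd, one_dvd _⟩)
      (Ideal.subset_span ⟨⟨g, minGens_subset_lcmBar hItop hg⟩, rfl⟩)

lemma exists_isGreatest_lcmBar_le (a : Fin nv → ℕ)
    (hne : {p : lcmBar K nv I | p.1 ≤ a}.Nonempty) :
    ∃ t, IsGreatest {p : lcmBar K nv I | p.1 ≤ a} t := by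
  have hfin : (minGens K nv I ∩ Set.Iic a).Finite := (Set.finite_Iic a).inter_of_right _
  have hle (p : lcmBar K nv I) (hp : p.1 ≤ a) : p.1 ≤ hfin.toFinset.sup id := by
    obtain ⟨B, hB, hpB⟩ := p.2.1
    rw [hpB] at hp ⊢
    refine Finset.sup_mono fun g hg => ?_
    rw [Set.Finite.mem_toFinset]
    exact ⟨hB hg, (Finset.le_sup (f := id) hg).trans hp⟩
  obtain ⟨p, hp⟩ := hne
  refine ⟨⟨hfin.toFinset.sup id, ⟨hfin.toFinset, ?_, rfl⟩, fun h0 => ?_⟩, ?_, hle⟩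
  · rw [Set.Finite.coe_toFinset]
    exact Set.inter_subset_left
  · exact p.2.2 (le_antisymm (h0 ▸ hle p hp) bot_le)
  · exact Finset.sup_le (f := id) fun g hg => (hfin.mem_toFinset.1 hg).2

lemma isAcyclicOn_setOf_lcmBarExponent_le (a : Fin nv →₀ ℕ)
    (hne : {p : lcmBar K nv I | lcmBarExponent p ≤ a}.Nonempty) :
    IsAcyclicOn K {p : lcmBar K nv I | lcmBarExponent p ≤ a} :=
  (exists_isGreatest_lcmBar_le a hne).elim fun _ => isAcyclicOn_of_isGreatest K

end LcmLattice

/-- Let `I` be a (proper) monomial ideal in `S = K[x₁,…,xₙ]` and fix a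
synor complex `S_*(L̄)` for `L̄ = lcm(I) ∖ {1}`.  Every synor resolution `(F_*, δ_*)` of
`S/I` — the sequence of multigraded free `S`-modules
`F_i = ⊕_{m ∈ L̄} S_{i-1}(L̄)^{(m)} ⊗ S(-m)` (encoded here as `F_{i+1} = ⊕_{m} S ⊗_K
S_i(L̄)^{(m)}` together with `F₀ = S`), with differentials determined by
`δ_i(ζ ⊗ 1) = Σ_{m' < m} (m/m') · (ζ_{m'} ⊗ 1)` where `∂ζ = Σ_{m' < m} ζ_{m'}` is the
strictly graded decomposition of the simplicial boundary (`ζ_{m'}` is the component of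
`∂ζ` on chains with largest element `m'`) — is a minimal multigraded free resolution of
`S/I`: it is exact in homological degrees `≥ 1`, the cokernel of `δ₁ : F₁ → F₀ ≅ S` is
`S/I` (i.e. the image of `δ₁` is `I`), and `δ_i(F_i) ⊆ (x₁,…,xₙ)·F_{i-1}` for all
`i ≥ 1`. -/
theorem synor_resolution_minimal_free
    (nv : ℕ) (I : Ideal (PolyS K nv)) (hI : IsMonomialIdeal K nv I) (hItop : I ≠ ⊤)
    (σ : SynorComplex K ↥(lcmBar K nv I))
    (hproj : ∀ (i : ℕ) (p : ↥(lcmBar K nv I)) (z : CGrp K ↥(lcmBar K nv I) (i + 2)),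
      z ∈ σ.S (i + 1) p → ∀ q : ↥(lcmBar K nv I),
        projTop K ↥(lcmBar K nv I) q i (cbdry K ↥(lcmBar K nv I) (i + 1) z) ∈ σ.S i q)
    (δ : ∀ i : ℕ,
      (DirectSum ↥(lcmBar K nv I) fun p => PolyS K nv ⊗[K] ↥(σ.S (i + 1) p))
        →ₗ[PolyS K nv]
      (DirectSum ↥(lcmBar K nv I) fun p => PolyS K nv ⊗[K] ↥(σ.S i p)))
    (δ0 : (DirectSum ↥(lcmBar K nv I) fun p => PolyS K nv ⊗[K] ↥(σ.S 0 p))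
        →ₗ[PolyS K nv] PolyS K nv)
    (hδ0 : ∀ (p : ↥(lcmBar K nv I)) (z : CGrp K ↥(lcmBar K nv I) 1) (hz : z ∈ σ.S 0 p),
      δ0 (DirectSum.lof (PolyS K nv) ↥(lcmBar K nv I)
            (fun p => PolyS K nv ⊗[K] ↥(σ.S 0 p)) p
            ((1 : PolyS K nv) ⊗ₜ[K] (⟨z, hz⟩ : ↥(σ.S 0 p)))) =
        ((cbdry K ↥(lcmBar K nv I) 0 z) (emptyOC ↥(lcmBar K nv I))) •
          MvPolynomial.monomial (Finsupp.equivFunOnFinite.symm p.1) (1 : K))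
    (hδ : ∀ (i : ℕ) (p : ↥(lcmBar K nv I)) (z : CGrp K ↥(lcmBar K nv I) (i + 2))
        (hz : z ∈ σ.S (i + 1) p),
      δ i (DirectSum.lof (PolyS K nv) ↥(lcmBar K nv I)
            (fun p => PolyS K nv ⊗[K] ↥(σ.S (i + 1) p)) p
            ((1 : PolyS K nv) ⊗ₜ[K] (⟨z, hz⟩ : ↥(σ.S (i + 1) p)))) =
        ∑ᶠ q ∈ {q : ↥(lcmBar K nv I) | q.1 < p.1},
          DirectSum.lof (PolyS K nv) ↥(lcmBar K nv I)
            (fun p => PolyS K nv ⊗[K] ↥(σ.S i p)) q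
            ((MvPolynomial.monomial (Finsupp.equivFunOnFinite.symm (p.1 - q.1)) (1 : K)) ⊗ₜ[K]
              (⟨projTop K ↥(lcmBar K nv I) q i (cbdry K ↥(lcmBar K nv I) (i + 1) z),
                hproj i p z hz q⟩ : ↥(σ.S i q)))) :
    (∀ i : ℕ, LinearMap.range (δ (i + 1)) = LinearMap.ker (δ i)) ∧
    (LinearMap.range (δ 0) = LinearMap.ker δ0) ∧
    (LinearMap.range δ0 = I) ∧
    (LinearMap.range δ0 ≤
      (Ideal.span (Set.range (MvPolynomial.X : Fin nv → PolyS K nv))) •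
        (⊤ : Submodule (PolyS K nv) (PolyS K nv))) ∧
    (∀ i : ℕ, LinearMap.range (δ i) ≤
      (Ideal.span (Set.range (MvPolynomial.X : Fin nv → PolyS K nv))) •
        (⊤ : Submodule (PolyS K nv)
          (DirectSum ↥(lcmBar K nv I) fun p => PolyS K nv ⊗[K] ↥(σ.S i p)))) := by
  have hδ' (i) : IsSynorDifferential lcmBarExponent σ i (δ i) := fun p ζ => by
    simp only [lcmBarExponent_tsub]
    exact hδ i p ζ ζ.2
  have hresolution := synor_resolution_minimal_free_general lcmBarExponent σ
    lcmBarExponent_strictMono lcmBarExponent_ne_zero isAcyclicOn_setOf_lcmBarExponent_le δ δ0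
    (fun p ζ => hδ0 p ζ ζ.2) hδ'
  rwa [span_monomial_lcmBarExponent hI hItop] at hresolution

end
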